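/- The quintic B-spline quasi-interpolant reproduces quintic polynomials: for every polynomial p of degree at most 5 and every x ∈ ℝ, Σ_{k∈ℤ} [ (13/240)(p(k−2) + p(k+2)) − (7/15)(p(k−1) + p(k+1)) + (73/40)p(k) ] · B₅(x − (k−3)) = p(x). -/

import Mathlib

open MeasureTheory

/-- The cardinal B-spline of degree `d`: `B₀` is the indicator function of `[0,1)` and
`B_{d+1} = B_d * B₀` (convolution), so `B_d` is supported on `[0, d+1]`. -/
noncomputable def cardB : ℕ → ℝ → ℝ
  | 0 => Set.indicator (Set.Ico (0 : ℝ) 1) 1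
  | (d + 1) => fun x => ∫ t : ℝ, cardB d (x - t) * cardB 0 t

/-!
Up to the factor `1 / d!`, the B-spline `B_d` is the `(d + 1)`-st difference of the truncated power
`x₊ ^ d`. Summation by parts moves these differences onto the coefficients of a series
`∑ p(k) B_d(x - k)`; they annihilate a polynomial `p` of degree at most `d`, so the series has no
knots and is a polynomial in `x`. It agrees with the polynomial `∑ B_d(j) p(x - j)` at the integers,
hence everywhere. For `d = 5` the values `B₅(j)` give, in terms of the second central difference
`s`, the operator `1 + s / 4 + s² / 120`, while the quasi-interpolation weights give
`1 - s / 4 + 13 s² / 240`. Their product is `1 + 11 s³ / 960 + 13 s⁴ / 28800`, and `s³` kills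
quintics.
-/

open Polynomial fwdDiff

section FwdDiff

section

variable {M G : Type*} [AddCommMonoid M] [AddCommGroup G] {h : M} {f g : M → G} {n : ℕ} {y : M}

lemma fwdDiff_iter_congr (hfg : ∀ j ≤ n, f (y + j • h) = g (y + j • h)) :
    Δ_[h] ^[n] f y = Δ_[h] ^[n] g y := by
  simp only [fwdDiff_iter_eq_sum_shift]
  exact Finset.sum_congr rfl fun j hj => by rw [hfg j (Finset.mem_range_succ_iff.mp hj)]

lemma fwdDiff_iter_eq_zero (hf : ∀ j ≤ n, f (y + j • h) = 0) : Δ_[h] ^[n] f y = 0 := by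
  rw [fwdDiff_iter_eq_sum_shift]
  exact Finset.sum_eq_zero fun j hj => by rw [hf j (Finset.mem_range_succ_iff.mp hj), smul_zero]

end

lemma fwdDiff_iter_comp_intCast {A G : Type*} [AddCommGroupWithOne A] [AddCommGroup G]
    (f : A → G) (n : ℕ) (k : ℤ) :
    Δ_[1] ^[n] (fun m : ℤ => f m) k = Δ_[1] ^[n] f (k : A) := by
  simp [fwdDiff_iter_eq_sum_shift]

lemma integral_fwdDiff_iter {E : Type*} [NormedAddCommGroup E] [NormedSpace ℝ E] {f : ℝ → E}
    (hf : ∀ a b, IntervalIntegrable f volume a b) (h δ x : ℝ) (n : ℕ) :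
    ∫ u in x..(x + δ), Δ_[h] ^[n] f u = Δ_[h] ^[n] (fun y => ∫ u in y..(y + δ), f u) x := by
  have intervalIntegrable_smul_shift (r c : ℝ) :
      IntervalIntegrable (fun u => r • f (u + c)) volume x (x + δ) :=
    ((IntervalIntegrable.comp_add_right_iff).mpr (hf _ _)).smul r
  simp only [fwdDiff_iter_eq_sum_shift, ← Int.cast_smul_eq_zsmul ℝ]
  rw [intervalIntegral.integral_finsetSum fun j _ => intervalIntegrable_smul_shift _ (j • h)]
  refine Finset.sum_congr rfl fun j _ => ?_
  rw [intervalIntegral.integral_smul, intervalIntegral.integral_comp_add_right,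
    add_right_comm x δ]

lemma tsum_mul_fwdDiff_iter {A R : Type*} [AddCommGroupWithOne A] [Ring R] [TopologicalSpace R]
    [IsTopologicalAddGroup R] [T2Space R] {q : ℤ → R} {f : A → R}
    (hqf : ∀ x : A, Summable fun k : ℤ => q k * f (x - k)) (n : ℕ) (x : A) :
    ∑' k : ℤ, q k * Δ_[1] ^[n] f (x - k) = ∑' k : ℤ, Δ_[1] ^[n] q k * f (x - k) := by
  have shift (j : ℕ) (k : ℤ) :
      q (k + j) * f (x - k) = q (k + j) * f (x + j - (k + j : ℤ)) := by
    rw [Int.cast_add, Int.cast_natCast, add_sub_add_right_eq_sub]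
  have summable_shift (j : ℕ) : Summable fun k : ℤ => q (k + j) * f (x - k) := by
    simp only [shift]
    exact (Equiv.addRight (j : ℤ)).summable_iff.mpr (hqf (x + j))
  have tsum_shift (j : ℕ) :
      ∑' k : ℤ, q k * f (x + j - k) = ∑' k : ℤ, q (k + j) * f (x - k) := by
    simp only [shift]
    exact ((Equiv.addRight (j : ℤ)).tsum_eq fun k => q k * f (x + j - k)).symm
  simp only [fwdDiff_iter_eq_sum_shift, nsmul_one, Finset.mul_sum, Finset.sum_mul, mul_smul_comm,
    smul_mul_assoc, sub_add_eq_add_sub]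
  rw [Summable.tsum_finsetSum fun (j : ℕ) _ => (hqf (x + j)).const_smul _,
    Summable.tsum_finsetSum fun j _ => (summable_shift j).const_smul _]
  refine Finset.sum_congr rfl fun j _ => ?_
  rw [(hqf (x + j)).tsum_const_smul, (summable_shift j).tsum_const_smul, tsum_shift]

end FwdDiff

/-- The truncated power `x₊ ^ d`, equal to `x ^ d` for `0 ≤ x` and to `0` for `x < 0`. For `d = 0`
this is the right-continuous Heaviside function, in accordance with `B₀` being the indicator
function of a half-open interval. -/
noncomputable def truncPow (d : ℕ) : ℝ → ℝ :=
  (Set.Ici 0).indicator (· ^ d)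

section TruncPow

variable {d : ℕ} {x : ℝ}

lemma truncPow_of_nonneg (hx : 0 ≤ x) : truncPow d x = x ^ d :=
  Set.indicator_of_mem (Set.mem_Ici.mpr hx) _

lemma truncPow_of_neg (hx : x < 0) : truncPow d x = 0 :=
  Set.indicator_of_notMem (Set.notMem_Ici.mpr hx) _

lemma truncPow_succ_eq_max_pow (d : ℕ) : truncPow (d + 1) = fun x => max x 0 ^ (d + 1) := by
  funext x
  rcases le_or_gt 0 x with hx | hx
  · rw [truncPow_of_nonneg hx, max_eq_left hx]
  · rw [truncPow_of_neg hx, max_eq_right hx.le, zero_pow d.succ_ne_zero]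

lemma monotone_truncPow (d : ℕ) : Monotone (truncPow d) := by
  intro a b hab
  rcases le_or_gt 0 a with ha | ha
  · rw [truncPow_of_nonneg ha, truncPow_of_nonneg (ha.trans hab)]
    gcongr
  · rw [truncPow_of_neg ha]
    exact Set.indicator_nonneg (fun y (hy : 0 ≤ y) => pow_nonneg hy d) b

lemma continuous_truncPow_succ (d : ℕ) : Continuous (truncPow (d + 1)) := by
  rw [truncPow_succ_eq_max_pow]
  fun_prop

lemma hasDerivWithinAt_truncPow_succ (d : ℕ) (x : ℝ) :
    HasDerivWithinAt (truncPow (d + 1)) ((d + 1) * truncPow d x) (Set.Ioi x) x := by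
  rcases le_or_gt 0 x with hx | hx
  · rw [truncPow_of_nonneg hx]
    have hpow : HasDerivWithinAt (· ^ (d + 1)) ((d + 1) * x ^ d) (Set.Ioi x) x := by
      simpa using (hasDerivAt_pow (d + 1) x).hasDerivWithinAt
    exact hpow.congr (fun y hy => truncPow_of_nonneg (hx.trans (le_of_lt hy)))
      (truncPow_of_nonneg hx)
  · rw [truncPow_of_neg hx, mul_zero]
    refine ((hasDerivAt_const x 0).congr_of_eventuallyEq ?_).hasDerivWithinAt
    filter_upwards [Iio_mem_nhds hx] with y hy using truncPow_of_neg hy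

lemma integral_truncPow (d : ℕ) (a b : ℝ) :
    ∫ u in a..b, truncPow d u = (truncPow (d + 1) b - truncPow (d + 1) a) / (d + 1) := by
  rw [eq_div_iff (by positivity), mul_comm, ← intervalIntegral.integral_const_mul]
  exact intervalIntegral.integral_eq_sub_of_hasDeriv_right (continuous_truncPow_succ d).continuousOn
    (fun x _ => hasDerivWithinAt_truncPow_succ d x)
    ((monotone_truncPow d).intervalIntegrable.const_mul _)

end TruncPow

section CardB

lemma cardB_succ (d : ℕ) (x : ℝ) : cardB (d + 1) x = ∫ u in (x - 1)..x, cardB d u := by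
  have integrand_eq : (fun t : ℝ => cardB d (x - t) * cardB 0 t)
      = (Set.Ico 0 1).indicator fun t => cardB d (x - t) := by
    funext t
    by_cases ht : t ∈ Set.Ico (0 : ℝ) 1 <;> simp [cardB, ht]
  calc cardB (d + 1) x
    _ = ∫ t : ℝ, (Set.Ico 0 1).indicator (fun t => cardB d (x - t)) t := by
      rw [cardB.eq_2, ← integrand_eq]
    _ = ∫ t in (0 : ℝ)..1, cardB d (x - t) := by
      rw [integral_indicator measurableSet_Ico, integral_Ico_eq_integral_Ioc,
        intervalIntegral.integral_of_le zero_le_one]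
    _ = ∫ u in (x - 1)..x, cardB d u := by
      rw [intervalIntegral.integral_comp_sub_left, sub_zero]

lemma cardB_zero_add_one (x : ℝ) : cardB 0 (x + 1) = Δ_[1] (truncPow 0) x := by
  simp only [cardB, truncPow, fwdDiff, Set.indicator, Set.mem_Ico, Set.mem_Ici, pow_zero,
    Pi.one_apply]
  grind

lemma cardB_add_eq_fwdDiff_iter (d : ℕ) (x : ℝ) :
    cardB d (x + (d + 1)) = Δ_[1] ^[d + 1] (truncPow d) x / d.factorial := by
  induction d generalizing x with
  | zero => simpa using cardB_zero_add_one x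
  | succ d ih =>
    have integral_eq : (fun y => ∫ u in y..(y + 1), truncPow d u)
        = (d + 1 : ℝ)⁻¹ • Δ_[1] (truncPow (d + 1)) := by
      funext y
      rw [integral_truncPow, Pi.smul_apply, smul_eq_mul, fwdDiff, div_eq_inv_mul]
    calc cardB (d + 1) (x + ((d + 1 : ℕ) + 1))
      _ = ∫ u in x..(x + 1), cardB d (u + (d + 1)) := by
        rw [cardB_succ, intervalIntegral.integral_comp_add_right]
        congr 1 <;> push_cast <;> ring
      _ = Δ_[1] ^[d + 1] (fun y => ∫ u in y..(y + 1), truncPow d u) x / d.factorial := by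
        simp only [ih]
        rw [intervalIntegral.integral_div,
          integral_fwdDiff_iter fun _ _ => (monotone_truncPow d).intervalIntegrable]
      _ = Δ_[1] ^[d + 1 + 1] (truncPow (d + 1)) x / (d + 1).factorial := by
        rw [integral_eq, fwdDiff_iter_const_smul, Pi.smul_apply, smul_eq_mul,
          ← Function.iterate_succ_apply, Nat.factorial_succ]
        push_cast
        field_simp

lemma cardB_eq_sum_truncPow (d : ℕ) (x : ℝ) :
    cardB d x = (∑ i ∈ Finset.range (d + 2), (-1) ^ (d + 1 - i) * (d + 1).choose i
      * truncPow d (x - (d + 1) + i)) / d.factorial := by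
  rw [← sub_add_cancel x (d + 1 : ℝ), cardB_add_eq_fwdDiff_iter, fwdDiff_iter_eq_sum_shift]
  simp [zsmul_eq_mul]

variable {d : ℕ} {x : ℝ}

lemma cardB_of_neg (hx : x < 0) : cardB d x = 0 := by
  rw [← sub_add_cancel x (d + 1 : ℝ), cardB_add_eq_fwdDiff_iter, div_eq_zero_iff]
  refine .inl (fwdDiff_iter_eq_zero fun j hj => truncPow_of_neg ?_)
  have : (j : ℝ) ≤ d + 1 := mod_cast hj
  rw [nsmul_one]
  linarith

lemma cardB_of_add_one_le (hx : d + 1 ≤ x) : cardB d x = 0 := by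
  have untruncate : Δ_[1] ^[d + 1] (truncPow d) (x - (d + 1))
      = Δ_[1] ^[d + 1] (fun y => y ^ d) (x - (d + 1)) := by
    refine fwdDiff_iter_congr fun j _ => truncPow_of_nonneg ?_
    rw [nsmul_one]
    exact add_nonneg (sub_nonneg.mpr hx) j.cast_nonneg
  rw [← sub_add_cancel x (d + 1 : ℝ), cardB_add_eq_fwdDiff_iter, untruncate,
    fwdDiff_iter_pow_eq_zero_of_lt d.lt_succ_self, Pi.zero_apply, zero_div]

end CardB

section Reproduction

variable {d : ℕ} {p : ℝ[X]}

lemma summable_indicator_Ici_mul_truncPow (q : ℤ → ℝ) (a : ℤ) (x : ℝ) :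
    Summable fun k : ℤ => (Set.Ici a).indicator q k * truncPow d (x - k) := by
  refine summable_of_ne_finset_zero (s := Finset.Icc a ⌊x⌋) fun k hk => ?_
  rw [Finset.mem_Icc, not_and_or, not_le, not_le, Int.floor_lt] at hk
  rcases hk with hk | hk
  · rw [Set.indicator_of_notMem (Set.notMem_Ici.mpr hk), zero_mul]
  · rw [truncPow_of_neg (sub_neg.mpr hk), mul_zero]

lemma fwdDiff_iter_indicator_Ici_eval_eq_zero (hp : p.natDegree ≤ d) {a k : ℤ}
    (hk : k ∉ Finset.Ico (a - (d + 1)) a) :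
    Δ_[1] ^[d + 1] ((Set.Ici a).indicator fun m : ℤ => p.eval (m : ℝ)) k = 0 := by
  rw [Finset.mem_Ico, not_and_or, not_le, not_lt] at hk
  rcases hk with hk | hk
  · refine fwdDiff_iter_eq_zero fun j hj => Set.indicator_of_notMem ?_ _
    rw [nsmul_one, Set.notMem_Ici]
    lia
  · have untruncate : Δ_[1] ^[d + 1] ((Set.Ici a).indicator fun m : ℤ => p.eval (m : ℝ)) k
        = Δ_[1] ^[d + 1] (fun m : ℤ => p.eval (m : ℝ)) k := by
      refine fwdDiff_iter_congr fun j _ => Set.indicator_of_mem ?_ _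
      rw [nsmul_one, Set.mem_Ici]
      lia
    rw [untruncate, fwdDiff_iter_comp_intCast (fun y => p.eval y),
      fwdDiff_iter_eq_zero_of_degree_lt (Nat.lt_succ_of_le hp), Pi.zero_apply]

lemma exists_polynomial_tsum_eval_mul_cardB_eq (hp : p.natDegree ≤ d) (a : ℤ) :
    ∃ P : ℝ[X], ∀ x : ℝ, a ≤ x →
      ∑' k : ℤ, p.eval (k : ℝ) * cardB d (x + (d + 1) - k) = P.eval x := by
  -- Dropping the coefficients below `a` makes the sum over translates of `truncPow d` finite, and
  -- leaves the series unchanged at `x + (d + 1)` because those B-splines vanish there.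
  set q : ℤ → ℝ := (Set.Ici a).indicator fun m : ℤ => p.eval (m : ℝ) with hq
  refine ⟨∑ k ∈ Finset.Ico (a - (d + 1)) a,
    C (Δ_[1] ^[d + 1] q k / d.factorial) * (X - C (k : ℝ)) ^ d, fun x hx => ?_⟩
  have truncate (k : ℤ) : p.eval (k : ℝ) * cardB d (x + (d + 1) - k)
      = q k * Δ_[1] ^[d + 1] (truncPow d) (x - k) / d.factorial := by
    rw [mul_div_assoc, ← cardB_add_eq_fwdDiff_iter, sub_add_eq_add_sub]
    rcases le_or_gt a k with hk | hk
    · rw [hq, Set.indicator_of_mem (Set.mem_Ici.mpr hk)]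
    · have : (k : ℝ) ≤ a := mod_cast hk.le
      rw [cardB_of_add_one_le (by linarith), mul_zero, mul_zero]
  calc ∑' k : ℤ, p.eval (k : ℝ) * cardB d (x + (d + 1) - k)
    _ = (∑' k : ℤ, Δ_[1] ^[d + 1] q k * truncPow d (x - k)) / d.factorial := by
      simp only [truncate]
      rw [tsum_div_const, tsum_mul_fwdDiff_iter (summable_indicator_Ici_mul_truncPow _ a)]
    _ = (∑ k ∈ Finset.Ico (a - (d + 1)) a, Δ_[1] ^[d + 1] q k * (x - k) ^ d) / d.factorial := by
      congr 1
      rw [tsum_eq_sum fun k hk => by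
        rw [fwdDiff_iter_indicator_Ici_eval_eq_zero hp hk, zero_mul]]
      refine Finset.sum_congr rfl fun k hk => ?_
      have : (k : ℝ) ≤ a := mod_cast (Finset.mem_Ico.mp hk).2.le
      rw [truncPow_of_nonneg (by linarith)]
    _ = _ := by
      simp only [eval_finsetSum, eval_mul, eval_C, eval_pow, eval_sub, eval_X, Finset.sum_div,
        div_mul_eq_mul_div]

lemma tsum_eval_mul_cardB_intCast_sub (p : ℝ[X]) (d : ℕ) (m : ℤ) :
    ∑' k : ℤ, p.eval (k : ℝ) * cardB d (m - k)
      = ∑ j ∈ Finset.range (d + 1), cardB d j * p.eval ((m : ℝ) - j) := by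
  have outside (j : ℤ) (hj : j ∉ (Finset.range (d + 1)).map Nat.castEmbedding) :
      cardB d j * p.eval ((m : ℝ) - j) = 0 := by
    have : j < 0 ∨ (d + 1 : ℤ) ≤ j := by
      by_contra! hj'
      exact hj (Finset.mem_map.mpr
        ⟨j.toNat, Finset.mem_range.mpr (by lia), Int.toNat_of_nonneg hj'.1⟩)
    rcases this with hneg | hle
    · rw [cardB_of_neg (mod_cast hneg), zero_mul]
    · rw [cardB_of_add_one_le (mod_cast hle), zero_mul]
  calc ∑' k : ℤ, p.eval (k : ℝ) * cardB d (m - k)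
    _ = ∑' j : ℤ, cardB d j * p.eval ((m : ℝ) - j) := by
      rw [← (Equiv.subLeft m).tsum_eq]
      simp [mul_comm]
    _ = ∑ j ∈ Finset.range (d + 1), cardB d j * p.eval ((m : ℝ) - j) := by
      rw [tsum_eq_sum outside, Finset.sum_map]
      simp

theorem tsum_eval_mul_cardB (hp : p.natDegree ≤ d) (x : ℝ) :
    ∑' k : ℤ, p.eval (k : ℝ) * cardB d (x - k)
      = ∑ j ∈ Finset.range (d + 1), cardB d j * p.eval (x - j) := by
  obtain ⟨P, hP⟩ := exists_polynomial_tsum_eval_mul_cardB_eq hp ⌊x - (d + 1)⌋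
  set Q : ℝ[X] := ∑ j ∈ Finset.range (d + 1), C (cardB d j) * taylor (d + 1 - j : ℝ) p
  have eval_Q (y : ℝ) :
      Q.eval y = ∑ j ∈ Finset.range (d + 1), cardB d j * p.eval (y + (d + 1) - j) := by
    simp only [Q, eval_finsetSum, eval_mul, eval_C, taylor_eval, add_sub_assoc]
  have eval_intCast_eq (m : ℤ) (hm : ⌊x - (d + 1)⌋ ≤ m) : P.eval (m : ℝ) = Q.eval (m : ℝ) := by
    rw [← hP m (mod_cast hm), eval_Q]
    exact_mod_cast tsum_eval_mul_cardB_intCast_sub p d (m + (d + 1))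
  have P_eq_Q : P = Q := by
    refine eq_of_infinite_eval_eq P Q ?_
    refine ((Set.Ici_infinite ⌊x - (d + 1)⌋).image Int.cast_injective.injOn).mono ?_
    rintro _ ⟨m, hm, rfl⟩
    exact eval_intCast_eq m hm
  have := hP (x - (d + 1)) (Int.floor_le _)
  rwa [P_eq_Q, eval_Q, sub_add_cancel] at this

end Reproduction

section Quintic

variable {p : ℝ[X]}

/-- The coefficients of the quintic quasi-interpolant: the coefficient of `B₅(x - (k - 3))` is the
value at `k` of this polynomial. -/
noncomputable def quasiCoeff (p : ℝ[X]) : ℝ[X] :=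
  (13 / 240 : ℝ) • (taylor (-2) p + taylor 2 p) - (7 / 15 : ℝ) • (taylor (-1) p + taylor 1 p)
    + (73 / 40 : ℝ) • p

lemma eval_quasiCoeff (p : ℝ[X]) (x : ℝ) :
    (quasiCoeff p).eval x = 13 / 240 * (p.eval (x - 2) + p.eval (x + 2))
      - 7 / 15 * (p.eval (x - 1) + p.eval (x + 1)) + 73 / 40 * p.eval x := by
  simp only [quasiCoeff, eval_add, eval_sub, eval_smul, taylor_eval, smul_eq_mul,
    ← sub_eq_add_neg]

lemma natDegree_quasiCoeff_le (p : ℝ[X]) : (quasiCoeff p).natDegree ≤ p.natDegree := by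
  have smul_taylor_add_le (c r s : ℝ) :
      (c • (taylor r p + taylor s p)).natDegree ≤ p.natDegree :=
    (natDegree_smul_le _ _).trans
      (natDegree_add_le_of_degree_le (natDegree_taylor p r).le (natDegree_taylor p s).le)
  exact natDegree_add_le_of_degree_le
    ((natDegree_sub_le_of_le (smul_taylor_add_le _ _ _) (smul_taylor_add_le _ _ _)).trans
      (max_self _).le)
    (natDegree_smul_le _ _)

lemma cardB_five_values : cardB 5 0 = 0 ∧ cardB 5 1 = 1 / 120 ∧ cardB 5 2 = 26 / 120 ∧
    cardB 5 3 = 66 / 120 ∧ cardB 5 4 = 26 / 120 ∧ cardB 5 5 = 1 / 120 := by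
  refine ⟨?_, ?_, ?_, ?_, ?_, ?_⟩ <;>
  norm_num [Finset.sum_range_succ, cardB_eq_sum_truncPow, truncPow_of_nonneg, truncPow_of_neg,
    Nat.choose, Nat.factorial]

lemma tsum_eval_mul_cardB_five (hp : p.natDegree ≤ 5) (x : ℝ) :
    ∑' k : ℤ, p.eval (k : ℝ) * cardB 5 (x - (k - 3)) = (p.eval (x + 2) + 26 * p.eval (x + 1)
      + 66 * p.eval x + 26 * p.eval (x - 1) + p.eval (x - 2)) / 120 := by
  simp only [sub_sub_eq_add_sub]
  obtain ⟨h0, h1, h2, h3, h4, h5⟩ := cardB_five_values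
  rw [tsum_eval_mul_cardB hp]
  simp only [Finset.sum_range_succ, Finset.sum_range_zero, Nat.cast_zero, Nat.cast_one,
    Nat.cast_ofNat, h0, h1, h2, h3, h4, h5]
  ring_nf

lemma central_sixth_difference_eval_eq_zero (hp : p.natDegree ≤ 5) (x : ℝ) :
    p.eval (x + 3) - 6 * p.eval (x + 2) + 15 * p.eval (x + 1) - 20 * p.eval x
      + 15 * p.eval (x - 1) - 6 * p.eval (x - 2) + p.eval (x - 3) = 0 := by
  have difference := congrFun (fwdDiff_iter_eq_zero_of_degree_lt (Nat.lt_succ_of_le hp)) (x - 3)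
  norm_num [fwdDiff_iter_eq_sum_shift, Finset.sum_range_succ, Nat.choose] at difference
  linear_combination (norm := ring_nf) difference

lemma weighted_average_eval_quasiCoeff (hp : p.natDegree ≤ 5) (x : ℝ) :
    ((quasiCoeff p).eval (x + 2) + 26 * (quasiCoeff p).eval (x + 1) + 66 * (quasiCoeff p).eval x
      + 26 * (quasiCoeff p).eval (x - 1) + (quasiCoeff p).eval (x - 2)) / 120 = p.eval x := by
  have s_cubed := central_sixth_difference_eval_eq_zero hp
  simp only [eval_quasiCoeff]
  -- The coefficients are those of `11 s³ / 960 + 13 s⁴ / 28800`.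
  linear_combination (norm := ring_nf) 11 / 960 * s_cubed x
    + 13 / 28800 * (s_cubed (x + 1) - 2 * s_cubed x + s_cubed (x - 1))

end Quintic

/-- The quintic B-spline quasi-interpolant reproduces quintic polynomials. -/
theorem qnbsqi_reproduces_quintics (p : Polynomial ℝ) (hp : p.degree ≤ 5) (x : ℝ) :
    ∑' k : ℤ, ((13 / 240 : ℝ) * (p.eval ((k : ℝ) - 2) + p.eval ((k : ℝ) + 2))
        - (7 / 15) * (p.eval ((k : ℝ) - 1) + p.eval ((k : ℝ) + 1))
        + (73 / 40) * p.eval (k : ℝ)) * cardB 5 (x - ((k : ℝ) - 3)) = p.eval x := by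
  have natDegree_le_five : p.natDegree ≤ 5 := natDegree_le_of_degree_le hp
  simp only [← eval_quasiCoeff]
  rw [tsum_eval_mul_cardB_five ((natDegree_quasiCoeff_le p).trans natDegree_le_five),
    weighted_average_eval_quasiCoeff natDegree_le_five]
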